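/- Let $X$ be a standard Borel space with a Borel probability measure $\mu$, let $Y$ be a compact metrizable space, and let $p: Y \to X$ be a Borel map such that $\mu(p(Y)) = 1$ and such that $p^{-1}(x)$ is compact for $\mu$-almost all $x \in X$. Then the set $M = \{\sigma \in P(Y) : p_*\sigma = \mu\}$ is a non-empty convex closed (hence compact) subset of $P(Y)$ in the weak* topology. -/

import Mathlib

open MeasureTheory
open scoped ENNReal NNReal

open Filter Set TopologicalSpace Topology

/-!
Let `f : (ℕ → ℕ) → X` be continuous, and let `H l` be a measurable hull of the image under `f` of
the cylinder of sequences with initial segment `l`. Outside a null set, a point of `H l` lies in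
some `H (m :: l)` and in the closure of the image of the cylinder. Following the least such `m` at
every stage gives a measurable map `s` with `f (s x) = x` for almost every `x` in the hull of the
range. Hence analytic sets are null measurable and Borel maps have almost everywhere defined
measurable sections, whose push-forwards are lifts of `μ`.

For closedness, let `U` range over a countable basis of `Y`. The point `y` lies in the closed fiber
over `x` iff `x ∈ p(U)` for every `U ∋ y`. Up to a null set the sets `p(U)` are Borel, hence closed
in some finer Polish topology on `X`. If `K` is compact in that topology and avoids a null set, then
the graph of `p` over `K` is closed, and projecting along `K` shows that `p⁻¹(K)` is closed.
Such `K` approximate every Borel set from inside, so `p_* σ = μ` amounts to the conditions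
`μ K ≤ σ (p⁻¹(K))`, which are closed by the portmanteau theorem.
-/

section LeftmostBranch

/-- The initial segment of length `n` of the branch of the tree `T` obtained by always moving to the
least child. As for `PiNat.res`, finite sequences are stored in reverse, so that the children of
`l` are the lists `m :: l`. -/
noncomputable def leftmostPrefix (T : Set (List ℕ)) : ℕ → List ℕ
  | 0 => []
  | n + 1 => sInf {m | m :: leftmostPrefix T n ∈ T} :: leftmostPrefix T n

/-- The branch of the tree `T` obtained by always moving to the least child, or to child `0` at a
node without children. -/
noncomputable def leftmostBranch (T : Set (List ℕ)) (n : ℕ) : ℕ :=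
  sInf {m | m :: leftmostPrefix T n ∈ T}

lemma res_leftmostBranch (T : Set (List ℕ)) (n : ℕ) :
    PiNat.res (leftmostBranch T) n = leftmostPrefix T n := by
  induction n with
  | zero => rfl
  | succ n ih => rw [PiNat.res_succ, ih, leftmostBranch, leftmostPrefix]

lemma res_leftmostBranch_mem {T : Set (List ℕ)} (hnil : [] ∈ T)
    (hchild : ∀ l ∈ T, ∃ m, m :: l ∈ T) (n : ℕ) : PiNat.res (leftmostBranch T) n ∈ T := by
  rw [res_leftmostBranch]
  induction n with
  | zero => exact hnil
  | succ n ih => exact Nat.sInf_mem (hchild _ ih)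

lemma measurable_sInf_setOf_mem {X : Type*} [MeasurableSpace X] {S : ℕ → Set X}
    (hS : ∀ m, MeasurableSet (S m)) : Measurable fun x => sInf {m | x ∈ S m} := by
  refine measurable_of_Iic fun k => ?_
  have hpre : (fun x => sInf {m | x ∈ S m}) ⁻¹' Iic k = (⋃ m, S m)ᶜ ∪ ⋃ m ≤ k, S m := by
    ext x
    simp only [mem_preimage, mem_Iic, mem_union, mem_compl_iff, mem_iUnion, exists_prop]
    constructor
    · intro hx
      by_cases hne : ∃ m, x ∈ S m
      · exact Or.inr ⟨_, hx, Nat.sInf_mem hne⟩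
      · exact Or.inl hne
    · rintro (hx | ⟨m, hmk, hm⟩)
      · have hempty : {m | x ∈ S m} = ∅ := eq_empty_of_forall_notMem fun m hm => hx ⟨m, hm⟩
        rw [hempty, Nat.sInf_empty]
        exact zero_le
      · exact (Nat.sInf_le hm).trans hmk
  rw [hpre]
  exact (MeasurableSet.iUnion hS).compl.union (.iUnion fun m => .iUnion fun _ => hS m)

lemma measurableSet_leftmostPrefix_eq {X : Type*} [MeasurableSpace X] {H : List ℕ → Set X}
    (hH : ∀ l, MeasurableSet (H l)) (n : ℕ) (l : List ℕ) :
    MeasurableSet {x | leftmostPrefix {l | x ∈ H l} n = l} := by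
  induction n generalizing l with
  | zero => exact .const ([] = l)
  | succ n ih =>
    cases l with
    | nil => simp [leftmostPrefix]
    | cons m l =>
      have hsplit : {x | leftmostPrefix {l | x ∈ H l} (n + 1) = m :: l} =
          {x | sInf {k | x ∈ H (k :: l)} = m} ∩ {x | leftmostPrefix {l | x ∈ H l} n = l} := by
        ext x
        simp +contextual [leftmostPrefix]
      rw [hsplit]
      exact (measurable_sInf_setOf_mem (fun k => hH (k :: l)) (measurableSet_singleton m)).inter
        (ih l)

lemma measurable_leftmostBranch {X : Type*} [MeasurableSpace X] {H : List ℕ → Set X}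
    (hH : ∀ l, MeasurableSet (H l)) : Measurable fun x => leftmostBranch {l | x ∈ H l} := by
  refine measurable_pi_lambda _ fun n => measurable_to_countable' fun k => ?_
  have hpre : (fun x => leftmostBranch {l | x ∈ H l} n) ⁻¹' {k} =
      ⋃ l, {x | leftmostPrefix {l | x ∈ H l} (n + 1) = k :: l} := by
    ext x
    simp [leftmostPrefix, leftmostBranch]
  rw [hpre]
  exact .iUnion fun l => measurableSet_leftmostPrefix_eq hH (n + 1) (k :: l)

end LeftmostBranch

section MeasurableSection

/-- The set of sequences whose initial segment, in the reversed order of `PiNat.res`, is `l`. It is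
a `PiNat.cylinder` indexed by the countable type of finite sequences. -/
def prefixCylinder (l : List ℕ) : Set (ℕ → ℕ) :=
  {z | PiNat.res z l.length = l}

lemma prefixCylinder_nil : prefixCylinder [] = univ :=
  eq_univ_of_forall fun _ => rfl

lemma prefixCylinder_res (z : ℕ → ℕ) (n : ℕ) :
    prefixCylinder (PiNat.res z n) = PiNat.cylinder z n := by
  rw [PiNat.cylinder_eq_res, prefixCylinder, PiNat.res_length]

lemma prefixCylinder_subset_iUnion_cons (l : List ℕ) :
    prefixCylinder l ⊆ ⋃ m, prefixCylinder (m :: l) := by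
  intro z hz
  refine mem_iUnion.2 ⟨z l.length, ?_⟩
  change z l.length :: PiNat.res z l.length = z l.length :: l
  rw [hz]

lemma eq_of_forall_mem_closure_image_cylinder {E : ℕ → Type*} [∀ n, TopologicalSpace (E n)]
    [∀ n, DiscreteTopology (E n)] {X : Type*} [TopologicalSpace X] [T2Space X]
    {f : (∀ n, E n) → X} (hf : Continuous f) {z : ∀ n, E n} {x : X}
    (hx : ∀ n, x ∈ closure (f '' PiNat.cylinder z n)) : f z = x := by
  by_contra hne
  obtain ⟨U, V, hU, hV, hzU, hxV, hUV⟩ := t2_separation hne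
  obtain ⟨-, ⟨⟨w, n, rfl⟩, hzw, hsub⟩⟩ :=
    (PiNat.isTopologicalBasis_cylinders E).exists_subset_of_mem_open hzU (hU.preimage hf)
  rw [← PiNat.mem_cylinder_iff_eq.1 hzw] at hsub
  obtain ⟨y, hyV, hyf⟩ := mem_closure_iff.1 (hx n) V hV hxV
  exact disjoint_left.1 hUV (image_subset_iff.2 hsub hyf) hyV

lemma ae_mem_of_mem_toMeasurable {X : Type*} [MeasurableSpace X] {μ : Measure X} [SFinite μ]
    {s t : Set X} (hst : s ⊆ t) (ht : MeasurableSet t) :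
    ∀ᵐ x ∂μ, x ∈ toMeasurable μ s → x ∈ t := by
  have hnull : μ (toMeasurable μ s ∩ tᶜ) = 0 := by
    rw [Measure.measure_toMeasurable_inter_of_sFinite ht.compl,
      (disjoint_compl_right_iff_subset.2 hst).inter_eq, measure_empty]
  filter_upwards [measure_eq_zero_iff_ae_notMem.1 hnull] with x hx hxs
  exact not_not.1 fun hxt => hx ⟨hxs, hxt⟩

variable {X : Type*} [TopologicalSpace X] [T2Space X] [MeasurableSpace X]
  [OpensMeasurableSpace X] {μ : Measure X} [SFinite μ]

lemma exists_measurable_ae_section_of_continuous {f : (ℕ → ℕ) → X} (hf : Continuous f) :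
    ∃ s : X → ℕ → ℕ, Measurable s ∧ ∀ᵐ x ∂μ, x ∈ toMeasurable μ (range f) → f (s x) = x := by
  let H : List ℕ → Set X := fun l => toMeasurable μ (f '' prefixCylinder l)
  have hH : ∀ l, MeasurableSet (H l) := fun l => measurableSet_toMeasurable μ _
  have hchild : ∀ᵐ x ∂μ, ∀ l, x ∈ H l → ∃ m, x ∈ H (m :: l) := by
    refine ae_all_iff.2 fun l => ?_
    have hsub : f '' prefixCylinder l ⊆ ⋃ m, H (m :: l) := by
      refine (image_mono (prefixCylinder_subset_iUnion_cons l)).trans ?_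
      rw [image_iUnion]
      exact iUnion_mono fun m => subset_toMeasurable μ _
    simpa only [mem_iUnion] using
      ae_mem_of_mem_toMeasurable hsub (.iUnion fun m => hH (m :: l))
  have hclosure : ∀ᵐ x ∂μ, ∀ l, x ∈ H l → x ∈ closure (f '' prefixCylinder l) :=
    ae_all_iff.2 fun l =>
      ae_mem_of_mem_toMeasurable subset_closure isClosed_closure.measurableSet
  refine ⟨fun x => leftmostBranch {l | x ∈ H l}, measurable_leftmostBranch hH, ?_⟩
  filter_upwards [hchild, hclosure] with x hxchild hxclosure hx
  have hnil : x ∈ H [] := by simpa only [H, prefixCylinder_nil, image_univ] using hx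
  refine eq_of_forall_mem_closure_image_cylinder hf fun n => ?_
  rw [← prefixCylinder_res]
  exact hxclosure _ (res_leftmostBranch_mem hnil hxchild n)

lemma nullMeasurableSet_of_analyticSet {A : Set X} (hA : AnalyticSet A) :
    NullMeasurableSet A μ := by
  rw [AnalyticSet] at hA
  obtain rfl | ⟨f, hf, rfl⟩ := hA
  · exact nullMeasurableSet_empty
  obtain ⟨s, -, hs⟩ := exists_measurable_ae_section_of_continuous (μ := μ) hf
  refine (measurableSet_toMeasurable μ (range f)).nullMeasurableSet.congr ?_
  filter_upwards [hs] with x hx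
  exact propext ⟨fun h => ⟨s x, hx h⟩, fun h => subset_toMeasurable μ _ h⟩

lemma borelSpace_of_le {Y : Type*} [MeasurableSpace Y] {t t' : TopologicalSpace Y}
    (hle : t' ≤ t) (ht : PolishSpace (h := t)) (hborel : @BorelSpace Y t _)
    (ht' : PolishSpace (h := t')) : @BorelSpace Y t' _ :=
  @BorelSpace.mk _ t' _ <| by
    rw [borel_eq_borel_of_le ht' ht hle]
    exact hborel.measurable_eq

lemma exists_measurable_ae_section [SecondCountableTopology X] {Y : Type*} [MeasurableSpace Y]
    [StandardBorelSpace Y] [Nonempty Y] {p : Y → X} (hp : Measurable p) :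
    ∃ s : X → Y, Measurable s ∧ ∀ᵐ x ∂μ, x ∈ toMeasurable μ (range p) → p (s x) = x := by
  let _ := upgradeStandardBorel Y
  obtain ⟨t, htle, hpt, _⟩ := hp.exists_continuous
  have : BorelSpace Y := borelSpace_of_le htle inferInstance inferInstance inferInstance
  obtain ⟨g, hg, hgsurj⟩ := PolishSpace.exists_nat_nat_continuous_surjective Y
  obtain ⟨s, hs, hps⟩ :=
    exists_measurable_ae_section_of_continuous (μ := μ) (hpt.comp hg)
  refine ⟨g ∘ s, hg.measurable.comp hs, ?_⟩
  rwa [hgsurj.range_comp] at hps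

end MeasurableSection

section Lifts

lemma exists_probabilityMeasure_map_eq {X Y : Type*} [MeasurableSpace X] [StandardBorelSpace X]
    [MeasurableSpace Y] [StandardBorelSpace Y] {μ : Measure X} [IsProbabilityMeasure μ]
    {p : Y → X} (hp : Measurable p) (hfull : μ (range p) = 1) :
    ∃ σ : ProbabilityMeasure Y, σ.toMeasure.map p = μ := by
  let _ := upgradeStandardBorel X
  have : Nonempty Y := by
    refine (isEmpty_or_nonempty Y).resolve_left fun _ => ?_
    simp [range_eq_empty] at hfull
  obtain ⟨s, hs, hps⟩ := exists_measurable_ae_section (μ := μ) hp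
  have hhull : ∀ᵐ x ∂μ, x ∈ toMeasurable μ (range p) :=
    (mem_ae_iff_prob_eq_one (measurableSet_toMeasurable μ _)).2
      ((measure_toMeasurable _).trans hfull)
  have hsection : p ∘ s =ᵐ[μ] id := by
    filter_upwards [hps, hhull] with x hx hxhull using hx hxhull
  refine ⟨⟨μ.map s, Measure.isProbabilityMeasure_map hs.aemeasurable⟩, ?_⟩
  calc (μ.map s).map p = μ.map (p ∘ s) := Measure.map_map hp hs
    _ = μ := by rw [Measure.map_congr hsection, Measure.map_id]

lemma map_smul_add_smul_eq {X Y : Type*} [MeasurableSpace X] [MeasurableSpace Y]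
    {μ : Measure X} {σ τ : Measure Y} {p : Y → X} (hp : Measurable p) (hσ : σ.map p = μ)
    (hτ : τ.map p = μ) {a b : ℝ≥0∞} (hab : a + b = 1) : (a • σ + b • τ).map p = μ := by
  rw [Measure.map_add _ _ hp, Measure.map_smul, Measure.map_smul, hσ, hτ, ← add_smul, hab,
    one_smul]

lemma exists_polishSpace_borelSpace_forall_isClosed {X ι : Type*} [MeasurableSpace X]
    [StandardBorelSpace X] [Countable ι] {D : ι → Set X} (hD : ∀ i, MeasurableSet (D i)) :
    ∃ _ : TopologicalSpace X, PolishSpace X ∧ BorelSpace X ∧ ∀ i, IsClosed (D i) := by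
  let _ := upgradeStandardBorel X
  choose m hm hpolish hclosed _ using fun i => (hD i).isClopenable
  obtain ⟨t, htm, hle, htpolish⟩ := PolishSpace.exists_polishSpace_forall_le m hm hpolish
  exact ⟨t, htpolish, borelSpace_of_le hle inferInstance inferInstance htpolish,
    fun i => (hclosed i).mono (htm i)⟩

lemma isClosed_preimage_of_isCompact {X Y : Type*} [TopologicalSpace X] [TopologicalSpace Y]
    {p : Y → X} {K : Set X} (hK : IsCompact K) {b : Set (Set Y)} (hb : IsTopologicalBasis b)
    (hfib : ∀ x ∈ K, IsClosed (p ⁻¹' {x}))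
    (himage : ∀ U ∈ b, IsClosed ((↑) ⁻¹' (p '' U) : Set K)) : IsClosed (p ⁻¹' K) := by
  have : CompactSpace K := isCompact_iff_compactSpace.1 hK
  let G : Set (Y × K) := ⋂ U ∈ b, {q | q.1 ∈ U → (q.2 : X) ∈ p '' U}
  have hG : IsClosed G := isClosed_biInter fun U hU =>
    isClosed_imp ((hb.isOpen hU).preimage continuous_fst) ((himage U hU).preimage continuous_snd)
  have hfst : p ⁻¹' K = Prod.fst '' G := by
    refine Subset.antisymm (fun y hy => ?_) ?_
    · exact ⟨(y, ⟨p y, hy⟩), mem_iInter₂.2 fun U _ hyU => mem_image_of_mem p hyU, rfl⟩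
    · rintro - ⟨⟨y, x⟩, hyx, rfl⟩
      have hy : y ∈ closure (p ⁻¹' {(x : X)}) := hb.mem_closure_iff.2 fun U hU hyU =>
        let ⟨z, hzU, hzx⟩ := mem_iInter₂.1 hyx U hU hyU
        ⟨z, hzU, hzx⟩
      have hpy : p y = x := by rwa [(hfib x x.2).closure_eq] at hy
      exact mem_preimage.2 (hpy ▸ x.2)
  exact hfst ▸ isClosedMap_fst_of_compactSpace G hG

variable {X Y : Type*} [MeasurableSpace X] [StandardBorelSpace X] {μ : Measure X}
  [TopologicalSpace Y] [PolishSpace Y] [MeasurableSpace Y] [BorelSpace Y] {p : Y → X}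

lemma exists_isClosed_preimage_lt_measure [IsFiniteMeasure μ] (hp : Measurable p)
    (hfib : ∀ᵐ x ∂μ, IsClosed (p ⁻¹' {x})) {B : Set X} (hB : MeasurableSet B) {c : ℝ≥0∞}
    (hc : c < μ B) : ∃ K ⊆ B, MeasurableSet K ∧ IsClosed (p ⁻¹' K) ∧ c < μ K := by
  have hnull : ∀ U : countableBasis Y, NullMeasurableSet (p '' U) μ := fun U => by
    let _ := upgradeStandardBorel X
    exact nullMeasurableSet_of_analyticSet
      ((isOpen_of_mem_countableBasis U.2).measurableSet.analyticSet_image hp)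
  have : Countable (countableBasis Y) := (countable_countableBasis Y).to_subtype
  let D : countableBasis Y → Set X := fun U => toMeasurable μ (p '' U)
  have hD : ∀ᵐ x ∂μ, ∀ U, x ∈ D U ↔ x ∈ p '' U :=
    ae_all_iff.2 fun U => (hnull U).toMeasurable_ae_eq.mem_iff
  obtain ⟨_, _, _, hDclosed⟩ := exists_polishSpace_borelSpace_forall_isClosed
    fun U => measurableSet_toMeasurable μ (p '' (U : countableBasis Y))
  obtain ⟨G, hGae, hG, hGgood⟩ := (hfib.and hD).exists_measurable_mem
  rw [← measure_inter_conull hGae] at hc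
  obtain ⟨K, hKBG, hK, hcK⟩ := (hB.inter hG).exists_lt_isCompact hc
  have hgood : ∀ x ∈ K, IsClosed (p ⁻¹' {x}) ∧ ∀ U, x ∈ D U ↔ x ∈ p '' U :=
    fun x hx => hGgood x (hKBG hx).2
  refine ⟨K, hKBG.trans inter_subset_left, hK.measurableSet, ?_, hcK⟩
  refine isClosed_preimage_of_isCompact hK (isBasis_countableBasis Y)
    (fun x hx => (hgood x hx).1) fun U hU => ?_
  have hDU : ((↑) ⁻¹' (p '' U) : Set K) = (↑) ⁻¹' D ⟨U, hU⟩ := by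
    ext x
    exact ((hgood x x.2).2 ⟨U, hU⟩).symm
  exact hDU ▸ (hDclosed ⟨U, hU⟩).preimage continuous_subtype_val

lemma map_eq_iff_forall_isClosed_preimage_le [IsProbabilityMeasure μ] (hp : Measurable p)
    (hfib : ∀ᵐ x ∂μ, IsClosed (p ⁻¹' {x})) {σ : Measure Y} [IsProbabilityMeasure σ] :
    σ.map p = μ ↔ ∀ K, MeasurableSet K → IsClosed (p ⁻¹' K) → μ K ≤ σ (p ⁻¹' K) := by
  refine ⟨fun h K hK _ => by rw [← h, Measure.map_apply hp hK], fun h => ?_⟩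
  have : IsProbabilityMeasure (σ.map p) := Measure.isProbabilityMeasure_map hp.aemeasurable
  refine (Measure.eq_of_le_of_isProbabilityMeasure (Measure.le_iff.2 fun B hB => ?_)).symm
  refine le_of_forall_lt fun c hc => ?_
  obtain ⟨K, hKB, hK, hpK, hcK⟩ := exists_isClosed_preimage_lt_measure hp hfib hB hc
  calc c < μ K := hcK
    _ ≤ σ (p ⁻¹' K) := h K hK hpK
    _ ≤ σ (p ⁻¹' B) := measure_mono (preimage_mono hKB)
    _ = σ.map p B := (Measure.map_apply hp hB).symm

lemma isClosed_setOf_le_probabilityMeasure {Z : Type*} [TopologicalSpace Z] [MeasurableSpace Z]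
    [OpensMeasurableSpace Z] [HasOuterApproxClosed Z] {F : Set Z} (hF : IsClosed F) (c : ℝ≥0∞) :
    IsClosed {σ : ProbabilityMeasure Z | c ≤ σ.toMeasure F} := by
  refine isClosed_iff_forall_filter.2 fun σ L _ hL hLσ => ?_
  have hlimsup : L.limsup (fun τ : ProbabilityMeasure Z => τ.toMeasure F) ≤ σ.toMeasure F :=
    ProbabilityMeasure.limsup_measure_closed_le_of_tendsto (μs := id) hLσ hF
  exact (le_limsup_of_frequently_le (Eventually.frequently (le_principal_iff.1 hL))).trans hlimsup

lemma isClosed_setOf_map_eq [IsProbabilityMeasure μ] (hp : Measurable p)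
    (hfib : ∀ᵐ x ∂μ, IsClosed (p ⁻¹' {x})) :
    IsClosed {σ : ProbabilityMeasure Y | σ.toMeasure.map p = μ} := by
  simp only [map_eq_iff_forall_isClosed_preimage_le hp hfib, ofPred_forall]
  exact isClosed_iInter fun K => isClosed_iInter fun _ => isClosed_iInter fun hK =>
    isClosed_setOf_le_probabilityMeasure hK (μ K)

end Lifts

theorem lifts_nonempty_convex_closed_compact_of_compactSpace_general
    {X : Type*} [MeasurableSpace X] [StandardBorelSpace X]
    (μ : Measure X) [IsProbabilityMeasure μ]
    {Y : Type*} [TopologicalSpace Y] [PolishSpace Y] [MeasurableSpace Y] [BorelSpace Y]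
    (p : Y → X) (hp : Measurable p)
    (hfull : μ (Set.range p) = 1)
    (hfib : ∀ᵐ x ∂μ, IsClosed (p ⁻¹' {x}))
    (M : Set (ProbabilityMeasure Y))
    (hM : M = {σ : ProbabilityMeasure Y | σ.toMeasure.map p = μ}) :
    M.Nonempty ∧
      (∀ σ ∈ M, ∀ τ ∈ M, ∀ a b : ℝ≥0∞, a + b = 1 →
        ∀ ρ : ProbabilityMeasure Y,
          ρ.toMeasure = a • σ.toMeasure + b • τ.toMeasure → ρ ∈ M) ∧
      IsClosed M ∧ (CompactSpace Y → IsCompact M) := by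
  subst hM
  have hclosed := isClosed_setOf_map_eq hp hfib
  refine ⟨exists_probabilityMeasure_map_eq hp hfull, ?_, hclosed, fun _ => hclosed.isCompact⟩
  intro σ hσ τ hτ a b hab ρ hρ
  rw [mem_ofPred_eq, hρ]
  exact map_smul_add_smul_eq hp hσ hτ hab

/-- The compact case of Lemma 3.1: if `Y` is a compact metrizable space, `X` a standard Borel
space with a Borel probability measure `μ`, and `p : Y → X` a Borel map with `μ (range p) = 1`
and compact fibers `μ`-a.e., then `M = {σ ∈ P(Y) | p_* σ = μ}` is non-empty, convex, closed
(hence compact) in the weak* topology on `P(Y)`. -/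
theorem lifts_nonempty_convex_closed_compact_of_compactSpace
    {X : Type*} [MeasurableSpace X] [StandardBorelSpace X]
    (μ : Measure X) [IsProbabilityMeasure μ]
    {Y : Type*} [TopologicalSpace Y] [CompactSpace Y] [TopologicalSpace.MetrizableSpace Y]
    [MeasurableSpace Y] [BorelSpace Y]
    (p : Y → X) (hp : Measurable p)
    (hfull : μ (Set.range p) = 1)
    (hfib : ∀ᵐ x ∂μ, IsCompact (p ⁻¹' {x}))
    (M : Set (ProbabilityMeasure Y))
    (hM : M = {σ : ProbabilityMeasure Y | σ.toMeasure.map p = μ}) :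
    M.Nonempty ∧
      (∀ σ ∈ M, ∀ τ ∈ M, ∀ a b : ℝ≥0∞, a + b = 1 →
        ∀ ρ : ProbabilityMeasure Y,
          ρ.toMeasure = a • σ.toMeasure + b • τ.toMeasure → ρ ∈ M) ∧
      IsClosed M ∧ IsCompact M := by
  let _ := TopologicalSpace.metrizableSpaceMetric Y
  obtain ⟨hne, hconvex, hclosed, hcompact⟩ :=
    lifts_nonempty_convex_closed_compact_of_compactSpace_general μ p hp hfull
      (hfib.mono fun _ hx => hx.isClosed) M hM
  exact ⟨hne, hconvex, hclosed, hcompact inferInstance⟩
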